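/- Let I ⊂ (−π, π) be a closed set consisting of finitely many disjoint closed intervals, none of which is a singleton, let k be a positive integer, and fix a closed set I_0 contained in the one-dimensional interior of I. Then there exists C = C(I, I_0, k) > 0 such that for every n, every trigonometric polynomial T_n of degree at most n, and every t ∈ I_0, |T_n^{(k)}(t)| ≤ C n^{k} ‖T_n‖_I. -/

import Mathlib

open scoped Real

/-- A real trigonometric polynomial of degree at most `n`. -/
def IsTrigPoly (n : ℕ) (T : ℝ → ℝ) : Prop :=
  ∃ A B : ℕ → ℝ,
    T = fun t => ∑ j ∈ Finset.range (n + 1),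
      (A j * Real.cos (j * t) + B j * Real.sin (j * t))

/-- Sup-norm of a function over a set. -/
noncomputable def supNormR (f : ℝ → ℝ) (X : Set ℝ) : ℝ := ⨆ x ∈ X, |f x|

open Polynomial in
lemma bern_disk (P : ℂ[X]) (M : ℝ) (h : ∀ z : ℂ, ‖z‖ = 1 → ‖P.eval z‖ ≤ M) (z : ℂ) (hz : ‖z‖ ≤ 1) :
    ‖P.eval z‖ ≤ M := by
  refine Complex.norm_le_of_forall_mem_frontier_norm_le (f := fun z => P.eval z) (U := Metric.ball 0 1)
    Metric.isBounded_ball P.differentiable.diffContOnCl ?_ ?_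
  · intro w hw
    rw [frontier_ball _ one_ne_zero] at hw
    exact h w (by simpa using hw)
  · rw [closure_ball _ one_ne_zero]; simpa using hz

open Polynomial in
lemma bern_growth (P : ℂ[X]) (N : ℕ) (hP : P.natDegree ≤ N) (M : ℝ)
    (h : ∀ z : ℂ, ‖z‖ = 1 → ‖P.eval z‖ ≤ M) (z : ℂ) (hz : 1 ≤ ‖z‖) :
    ‖P.eval z‖ ≤ M * ‖z‖ ^ N := by
  have key : ∀ w : ℂ, w ≠ 0 → (P.reflect N).eval w⁻¹ * w ^ N = P.eval w := by
    intro w hw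
    let _ := invertibleOfNonzero hw
    have := eval₂_reflect_mul_pow (RingHom.id ℂ) w N P hP
    simpa [eval₂_id] using this
  have hz0 : z ≠ 0 := by rintro rfl; simp at hz; linarith
  rw [← key z hz0, norm_mul, norm_pow]
  gcongr
  apply bern_disk
  · intro w hw
    have hw0 : w ≠ 0 := by rintro rfl; simp at hw
    have := key w⁻¹ (inv_ne_zero hw0)
    have h2 := h w⁻¹ (by simp [hw])
    rw [← this] at h2
    simpa [hw] using h2
  · rw [norm_inv]; exact inv_le_one_of_one_le₀ hz

open Polynomial in
lemma bern_circle (P : ℂ[X]) (N : ℕ) (hN : 1 ≤ N) (hP : P.natDegree ≤ N) (M : ℝ)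
    (h : ∀ z : ℂ, ‖z‖ = 1 → ‖P.eval z‖ ≤ M) (z : ℂ) (hz : ‖z‖ = 1) :
    ‖P.derivative.eval z‖ ≤ Real.exp 1 * N * M := by
  have hN0 : (0:ℝ) < N := by exact_mod_cast hN
  have hM : 0 ≤ M := (norm_nonneg _).trans (h z hz)
  have := Complex.norm_deriv_le_of_forall_mem_sphere_norm_le (c := z) (R := (N:ℝ)⁻¹) (C := Real.exp 1 * M)
    (f := fun z => P.eval z) (by positivity) P.differentiable.diffContOnCl ?_
  · rw [Polynomial.deriv] at this
    calc _ ≤ _ := this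
      _ = _ := by field_simp
  · intro w hw
    rw [mem_sphere_iff_norm] at hw
    have hw1 : ‖w‖ ≤ 1 + (N:ℝ)⁻¹ := by
      calc ‖w‖ = ‖z + (w - z)‖ := by ring_nf
        _ ≤ _ := norm_add_le _ _
        _ = _ := by rw [hz, hw]
    have he : (1 + (N:ℝ)⁻¹) ^ N ≤ Real.exp 1 := by
      calc (1 + (N:ℝ)⁻¹) ^ N ≤ (Real.exp ((N:ℝ)⁻¹)) ^ N := by
            gcongr; rw [add_comm]; exact Real.add_one_le_exp _
        _ = Real.exp 1 := by rw [← Real.exp_nat_mul]; congr 1; field_simp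
    rcases le_total ‖w‖ 1 with h1 | h1
    · calc _ ≤ M := bern_disk P M h w h1
        _ ≤ _ := le_mul_of_one_le_left hM (Real.one_le_exp (by norm_num))
    · calc _ ≤ M * ‖w‖ ^ N := bern_growth P N hP M h w h1
        _ ≤ M * (1 + (N:ℝ)⁻¹) ^ N := by gcongr
        _ ≤ M * Real.exp 1 := by gcongr
        _ = _ := mul_comm _ _

lemma exp_dist (a b : ℝ) (h : |a - b| ≤ π) :
    2 / π * |a - b| ≤ ‖Complex.exp (a * Complex.I) - Complex.exp (b * Complex.I)‖ := by
  have e : Complex.exp (a * Complex.I) - Complex.exp (b * Complex.I) =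
      Complex.exp (b * Complex.I) * (Complex.exp (Complex.I * ((a - b : ℝ) : ℂ)) - 1) := by
    rw [mul_sub, ← Complex.exp_add]; push_cast; ring_nf
  rw [e, norm_mul, Complex.norm_exp_ofReal_mul_I, one_mul, Complex.norm_exp_I_mul_ofReal_sub_one]
  have := Real.mul_abs_le_abs_sin (x := (a - b) / 2) (by rw [abs_div]; norm_num; linarith)
  rw [abs_div, abs_of_pos (two_pos : (0:ℝ) < 2)] at this
  rw [norm_mul, Real.norm_eq_abs, Real.norm_eq_abs, abs_of_pos (two_pos : (0:ℝ) < 2)]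
  linarith

lemma prod_fact (i N : ℕ) (h : i ≤ N) :
    ∏ j ∈ (Finset.range (N + 1)).erase i, |(i:ℝ) - j| = (i.factorial * (N - i).factorial : ℕ) := by
  induction N, h using Nat.le_induction with
  | base =>
    rw [Finset.range_add_one, Finset.erase_insert (by simp)]
    simp only [Nat.sub_self, Nat.factorial_zero, mul_one]
    rw [← Finset.prod_range_add_one_eq_factorial, ← Finset.prod_range_reflect]
    push_cast
    refine Finset.prod_congr rfl fun j hj => ?_
    have hj := Finset.mem_range.1 hj
    have e : (i:ℝ) = ((i - 1 - j : ℕ) : ℝ) + (j + 1) := by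
      have : i = (i - 1 - j) + (j + 1) := by omega
      exact_mod_cast this
    nth_rewrite 1 [e]
    rw [add_sub_cancel_left, abs_of_nonneg (by positivity)]
  | succ N hN ih =>
    rw [Finset.range_add_one, Finset.erase_insert_of_ne (by omega), Finset.prod_insert (by simp), ih,
      show N + 1 - i = (N - i) + 1 by omega, Nat.factorial_succ]
    rw [abs_sub_comm, abs_of_nonneg (by have : (i:ℝ) ≤ N := by exact_mod_cast hN
                                        push_cast; linarith)]
    push_cast [Nat.cast_sub hN]; ring

open Polynomial in
lemma remez_rough (δ : ℝ) (hδ : 0 < δ) (hδ1 : δ ≤ 1) (P : ℂ[X]) (N : ℕ) (hN : 1 ≤ N)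
    (hP : P.natDegree ≤ N) (t M : ℝ)
    (h : ∀ s : ℝ, |s - t| ≤ δ → ‖P.eval (Complex.exp (s * Complex.I))‖ ≤ M) (z : ℂ) (hz : ‖z‖ = 1) :
    ‖P.eval z‖ ≤ (2 * π * Real.exp 1 / δ) ^ N * M := by
  have hN0 : (0:ℝ) < N := by exact_mod_cast hN
  have hM : 0 ≤ M := (norm_nonneg _).trans (h t (by simp [hδ.le]))
  set θ : ℕ → ℝ := fun j => t + δ / N * j with hθ
  set v : ℕ → ℂ := fun j => Complex.exp (θ j * Complex.I) with hv
  set S := Finset.range (N + 1) with hS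
  have hd : ∀ i ∈ S, ∀ j ∈ S, 2 / π * (δ / N) * |(i:ℝ) - j| ≤ ‖v i - v j‖ := by
    intro i hi j hj
    have hi : (i:ℝ) ≤ N := by exact_mod_cast Nat.lt_succ_iff.1 (Finset.mem_range.1 hi)
    have hj : (j:ℝ) ≤ N := by exact_mod_cast Nat.lt_succ_iff.1 (Finset.mem_range.1 hj)
    have e : |θ i - θ j| = δ / N * |(i:ℝ) - j| := by
      have e' : θ i - θ j = δ / N * ((i:ℝ) - j) := by simp only [hθ]; ring
      rw [e', abs_mul, abs_of_pos (div_pos hδ hN0)]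
    have h1 : |(i:ℝ) - j| ≤ N := by
      rw [abs_le]; constructor <;> linarith [Nat.cast_nonneg (α := ℝ) i, Nat.cast_nonneg (α := ℝ) j]
    have h2 : |θ i - θ j| ≤ π := by
      rw [e]
      calc δ / N * |(i:ℝ) - j| ≤ δ / N * N := by gcongr
        _ = δ := by field_simp
        _ ≤ π := by linarith [Real.pi_gt_three]
    have := exp_dist _ _ h2
    rw [e] at this
    linarith
  have hinj : Set.InjOn v S := by
    intro i hi j hj hij
    have := hd i hi j hj
    rw [hij, sub_self, norm_zero] at this
    by_contra hne
    have : 0 < |(i:ℝ) - j| := abs_pos.2 (sub_ne_zero.2 (by exact_mod_cast hne))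
    have : 0 < 2 / π * (δ / N) * |(i:ℝ) - j| := by positivity
    linarith
  have hdeg : P.degree < S.card := by
    rw [hS, Finset.card_range]
    exact lt_of_le_of_lt (degree_le_of_natDegree_le hP) (by exact_mod_cast Nat.lt_succ_self N)
  have hb : ∀ i ∈ S, ‖(Lagrange.basis S v i).eval z‖ ≤
      (π * N / δ) ^ N / (i.factorial * (N - i).factorial : ℕ) := by
    intro i hi
    have hiN : i ≤ N := Nat.lt_succ_iff.1 (Finset.mem_range.1 hi)
    rw [Lagrange.basis, eval_prod, norm_prod, ← prod_fact i N hiN]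
    have hcard : (S.erase i).card = N := by rw [Finset.card_erase_of_mem hi]; simp [hS]
    rw [← hS]
    nth_rewrite 2 [← hcard]
    rw [← Finset.prod_const, ← Finset.prod_div_distrib]
    refine Finset.prod_le_prod (fun _ _ => norm_nonneg _) fun j hj => ?_
    have hji := (Finset.mem_erase.1 hj).1
    have hjS := (Finset.mem_erase.1 hj).2
    have hp : 0 < |(i:ℝ) - j| := abs_pos.2 (sub_ne_zero.2 (by exact_mod_cast hji.symm))
    simp only [Lagrange.basisDivisor, eval_mul, eval_C, eval_sub, eval_X, norm_mul, norm_inv]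
    have h1 := hd i hi j hjS
    have h2 : ‖z - v j‖ ≤ 2 := by
      refine (norm_sub_le _ _).trans ?_
      simp only [hv]
      rw [hz, Complex.norm_exp_ofReal_mul_I]; norm_num
    calc ‖v i - v j‖⁻¹ * ‖z - v j‖ ≤ (2 / π * (δ / N) * |(i:ℝ) - j|)⁻¹ * 2 := by gcongr
      _ = _ := by field_simp
  rw [Lagrange.eq_interpolate hinj hdeg, Lagrange.interpolate_apply, eval_finsetSum]
  have hsum : ∑ i ∈ S, (1:ℝ) / (i.factorial * (N - i).factorial : ℕ) = 2 ^ N / N.factorial := by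
    have : (2:ℝ) ^ N = ∑ i ∈ S, (N.choose i : ℝ) := by exact_mod_cast (Nat.sum_range_choose N).symm
    rw [this, Finset.sum_div]
    refine Finset.sum_congr rfl fun i hi => ?_
    have hiN : i ≤ N := Nat.lt_succ_iff.1 (Finset.mem_range.1 hi)
    have h3 := Nat.choose_mul_factorial_mul_factorial hiN
    have h4 : (N.choose i : ℝ) * i.factorial * (N - i).factorial = N.factorial := by exact_mod_cast h3
    have := Nat.factorial_pos i
    have := Nat.factorial_pos (N - i)
    have := Nat.factorial_pos N
    push_cast
    rw [div_eq_div_iff (by positivity) (by positivity), ← h4]; ring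
  have hexp : (N:ℝ) ^ N / N.factorial ≤ Real.exp 1 ^ N := by
    rw [← Real.exp_nat_mul, mul_one]
    exact Real.pow_div_factorial_le_exp _ hN0.le N
  calc _ ≤ ∑ i ∈ S, M * ((π * N / δ) ^ N * (1 / (i.factorial * (N - i).factorial : ℕ))) := by
        refine (norm_sum_le _ _).trans (Finset.sum_le_sum fun i hi => ?_)
        rw [eval_mul, eval_C, norm_mul, mul_one_div]
        refine mul_le_mul (h _ ?_) (hb i hi) (norm_nonneg _) hM
        have hi : (i:ℝ) ≤ N := by exact_mod_cast Nat.lt_succ_iff.1 (Finset.mem_range.1 hi)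
        simp only [hθ, add_sub_cancel_left]
        rw [abs_of_nonneg (by positivity)]
        calc δ / N * i ≤ δ / N * N := by gcongr
          _ = δ := by field_simp
    _ = M * ((2 * π / δ) ^ N * (N ^ N / N.factorial)) := by
        rw [← Finset.mul_sum, ← Finset.mul_sum, hsum]
        simp only [mul_pow, div_pow]; ring
    _ ≤ M * ((2 * π / δ) ^ N * Real.exp 1 ^ N) := by gcongr
    _ = _ := by rw [← mul_pow]; ring

open Polynomial in
lemma bern_local (δ : ℝ) (hδ : 0 < δ) (hδ1 : δ ≤ 1) : ∃ C : ℝ, 0 < C ∧ ∀ (P : ℂ[X]) (N : ℕ),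
    P.natDegree ≤ N → ∀ t M : ℝ,
    (∀ s : ℝ, |s - t| ≤ δ → ‖P.eval (Complex.exp (s * Complex.I))‖ ≤ M) →
    ‖P.derivative.eval (Complex.exp (t * Complex.I))‖ ≤ C * N * M := by
  set K := 2 * π * Real.exp 1 / δ with hK
  have hK0 : 0 < K := by positivity
  set q := Real.cos (δ / 2) with hq
  have hq0 : 0 < q := Real.cos_pos_of_mem_Ioo ⟨by linarith [Real.pi_gt_three], by linarith [Real.pi_gt_three]⟩
  have hq1 : q < 1 := by
    rw [hq, ← Real.cos_zero]
    exact Real.cos_lt_cos_of_nonneg_of_le_pi le_rfl (by linarith [Real.pi_gt_three]) (by linarith)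
  obtain ⟨m, hm⟩ := exists_pow_lt_of_lt_one (inv_pos.2 hK0) hq1
  have hmK : q ^ m * K ≤ 1 := by
    have := mul_le_mul_of_nonneg_right hm.le hK0.le
    rwa [inv_mul_cancel₀ hK0.ne'] at this
  refine ⟨Real.exp 1 * (m + 1) + m / 2, by positivity, fun P N hP t M h => ?_⟩
  have hM : 0 ≤ M := (norm_nonneg _).trans (h t (by simp [hδ.le]))
  rcases Nat.eq_zero_or_pos N with rfl | hN
  · rw [natDegree_eq_zero.1 (Nat.le_zero.1 hP) |>.choose_spec.symm]; simp
  set z₀ := Complex.exp (t * Complex.I) with hz₀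
  have hz₀1 : ‖z₀‖ = 1 := Complex.norm_exp_ofReal_mul_I t
  have hz₀0 : z₀ ≠ 0 := Complex.exp_ne_zero _
  set L : ℂ[X] := C (1 / 2) * (1 + C z₀⁻¹ * X) with hL
  set R := P * L ^ (m * N) with hR
  have hLd : L.natDegree ≤ 1 := by rw [hL]; compute_degree
  have hRd : R.natDegree ≤ (m + 1) * N := by
    refine natDegree_mul_le.trans ?_
    have := natDegree_pow_le_of_le (m * N) hLd
    linarith
  have hLe : ∀ z, L.eval z = (1 + z₀⁻¹ * z) / 2 := by intro z; simp [hL]; ring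
  have hRb : ∀ z : ℂ, ‖z‖ = 1 → ‖R.eval z‖ ≤ M := by
    intro z hz
    set φ := Complex.arg (z₀⁻¹ * z) with hφ
    have hw1 : ‖z₀⁻¹ * z‖ = 1 := by simp [hz, hz₀1]
    have hw : z₀⁻¹ * z = Complex.exp (φ * Complex.I) := by
      have := Complex.norm_mul_exp_arg_mul_I (z₀⁻¹ * z)
      rw [hw1] at this; simpa using this.symm
    have hzs : z = Complex.exp (((t + φ : ℝ) : ℂ) * Complex.I) := by
      push_cast
      rw [add_mul, Complex.exp_add, ← hw, ← hz₀, mul_inv_cancel_left₀ hz₀0]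
    rw [hR, eval_mul, eval_pow, norm_mul, norm_pow]
    by_cases hc : |φ| ≤ δ
    · have h1 : ‖L.eval z‖ ≤ 1 := by
        rw [hLe, norm_div]
        have := norm_add_le (1:ℂ) (z₀⁻¹ * z)
        rw [hw1, norm_one] at this
        rw [Complex.norm_two]; linarith
      have h2 := h (t + φ) (by simpa using hc)
      rw [← hzs] at h2
      calc _ ≤ M * 1 := mul_le_mul h2 (pow_le_one₀ (norm_nonneg _) h1) (by positivity) hM
        _ = M := mul_one M
    · push Not at hc
      have h1 : ‖L.eval z‖ ≤ q := by
        have e : L.eval z = Complex.exp ((φ / 2 : ℝ) * Complex.I) * (Real.cos (φ / 2) : ℝ) := by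
          rw [hLe, hw, Complex.ofReal_cos, Complex.cos, mul_div_assoc', mul_add, ← Complex.exp_add,
            ← Complex.exp_add, add_comm]
          push_cast
          ring_nf
          simp [add_comm]
        rw [e, norm_mul, Complex.norm_exp_ofReal_mul_I, one_mul, Complex.norm_real, Real.norm_eq_abs]
        have hpi : |φ| ≤ π := Complex.abs_arg_le_pi _
        have e2 : Real.cos (φ / 2) = Real.cos (|φ| / 2) := by
          rw [← Real.cos_abs, abs_div, abs_two]
        rw [e2, abs_of_nonneg (Real.cos_nonneg_of_mem_Icc
          ⟨by linarith [abs_nonneg φ, Real.pi_pos], by linarith⟩)]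
        exact Real.cos_le_cos_of_nonneg_of_le_pi (by linarith) (by linarith [Real.pi_pos]) (by linarith)
      have h2 := remez_rough δ hδ hδ1 P N hN hP t M h z hz
      calc _ ≤ (K ^ N * M) * q ^ (m * N) := by gcongr
        _ = (q ^ m * K) ^ N * M := by rw [mul_pow, pow_mul]; ring
        _ ≤ 1 * M := by gcongr; exact pow_le_one₀ (by positivity) hmK
        _ = M := one_mul M
  have hB := bern_circle R ((m + 1) * N) (by nlinarith) hRd M hRb z₀ hz₀1
  have hL1 : L.eval z₀ = 1 := by rw [hLe, inv_mul_cancel₀ hz₀0]; norm_num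
  have hLder : L.derivative.eval z₀ = z₀⁻¹ / 2 := by simp [hL]; ring
  have hRder : P.derivative.eval z₀ = R.derivative.eval z₀ - P.eval z₀ * ((m * N : ℕ) * (z₀⁻¹ / 2)) := by
    rw [hR, derivative_mul, derivative_pow]
    simp [hL1, hLder]
  rw [hRder]
  have h0 := h t (by simp [hδ.le])
  calc _ ≤ _ := norm_sub_le _ _
    _ ≤ Real.exp 1 * ((m + 1) * N : ℕ) * M + M * ((m * N : ℕ) * (1 / 2)) := by
      refine add_le_add hB ?_
      rw [norm_mul, norm_mul, norm_div, norm_inv, hz₀1, Complex.norm_natCast]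
      simp only [inv_one, Complex.norm_two]
      gcongr
    _ = _ := by push_cast; ring

lemma trig_hasDeriv (n : ℕ) (A B : ℕ → ℝ) (t : ℝ) :
    HasDerivAt (fun t : ℝ => ∑ j ∈ Finset.range (n + 1),
      (A j * Real.cos (j * t) + B j * Real.sin (j * t)))
      (∑ j ∈ Finset.range (n + 1),
      ((j * B j) * Real.cos (j * t) + (-(j * A j)) * Real.sin (j * t))) t := by
  refine HasDerivAt.fun_sum fun j _ => ?_
  have h : HasDerivAt (fun t : ℝ => (j:ℝ) * t) j t := by
    simpa using (hasDerivAt_id t).const_mul (j:ℝ)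
  convert (h.cos.const_mul (A j)).add (h.sin.const_mul (B j)) using 1
  · rfl
  · ring

lemma trig_deriv (n : ℕ) (T : ℝ → ℝ) (hT : IsTrigPoly n T) : IsTrigPoly n (deriv T) := by
  obtain ⟨A, B, rfl⟩ := hT
  exact ⟨fun j => j * B j, fun j => -(j * A j), funext fun t => (trig_hasDeriv n A B t).deriv⟩

lemma trig_diff (n : ℕ) (T : ℝ → ℝ) (hT : IsTrigPoly n T) : Differentiable ℝ T := by
  obtain ⟨A, B, rfl⟩ := hT
  exact fun t => (trig_hasDeriv n A B t).differentiableAt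

open Polynomial in
lemma trig_poly (n : ℕ) (T : ℝ → ℝ) (hT : IsTrigPoly n T) : ∃ P : ℂ[X], P.natDegree ≤ 2 * n ∧
    ∀ s : ℝ, (T s : ℂ) * Complex.exp (n * (s * Complex.I)) = P.eval (Complex.exp (s * Complex.I)) := by
  obtain ⟨A, B, rfl⟩ := hT
  refine ⟨∑ j ∈ Finset.range (n + 1), (C ((A j - B j * Complex.I) / 2) * X ^ (n + j) +
    C ((A j + B j * Complex.I) / 2) * X ^ (n - j)), ?_, ?_⟩
  · refine natDegree_sum_le_of_forall_le _ _ fun j hj => ?_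
    have := Finset.mem_range.1 hj
    refine (natDegree_add_le_of_le ((natDegree_C_mul_X_pow_le _ _)) ((natDegree_C_mul_X_pow_le _ _))).trans ?_
    rw [max_le_iff]; omega
  · intro s
    rw [eval_finsetSum]
    push_cast
    rw [Finset.sum_mul]
    refine Finset.sum_congr rfl fun j hj => ?_
    have hj : j ≤ n := Nat.lt_succ_iff.1 (Finset.mem_range.1 hj)
    simp only [eval_add, eval_mul, eval_C, eval_pow, eval_X]
    rw [← Complex.exp_nat_mul, ← Complex.exp_nat_mul, Complex.cos, Complex.sin]
    push_cast [Nat.cast_sub hj]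
    have e1 : ((n:ℂ) + j) * (s * Complex.I) = j * s * Complex.I + n * (s * Complex.I) := by ring
    have e2 : ((n:ℂ) - j) * (s * Complex.I) = -(j * s) * Complex.I + n * (s * Complex.I) := by ring
    rw [e1, e2, Complex.exp_add, Complex.exp_add]
    ring

lemma trig_local (δ : ℝ) (hδ : 0 < δ) (hδ1 : δ ≤ 1) : ∃ C : ℝ, 0 < C ∧ ∀ (n : ℕ) (T : ℝ → ℝ),
    IsTrigPoly n T → ∀ t M : ℝ, (∀ s : ℝ, |s - t| ≤ δ → |T s| ≤ M) →
    |deriv T t| ≤ C * n * M := by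
  obtain ⟨C, hC, h⟩ := bern_local δ hδ hδ1
  refine ⟨2 * C + 1, by positivity, fun n T hT t M hM => ?_⟩
  obtain ⟨P, hP, hPe⟩ := trig_poly n T hT
  have hn : ∀ s : ℝ, ‖Complex.exp (n * (s * Complex.I))‖ = 1 := by
    intro s
    rw [← mul_assoc]
    exact_mod_cast Complex.norm_exp_ofReal_mul_I (n * s)
  have h1 := h P (2 * n) hP t M (by
    intro s hs
    rw [← hPe, norm_mul, hn, mul_one, Complex.norm_real]
    exact hM s hs)
  have hI : HasDerivAt (fun s : ℝ => (s : ℂ) * Complex.I) Complex.I t := by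
    simpa using (Complex.ofRealCLM.hasDerivAt (x := t)).mul_const Complex.I
  have hT1 : HasDerivAt (fun s : ℝ => (T s : ℂ)) (deriv T t : ℝ) t :=
    ((trig_diff n T hT) t).hasDerivAt.ofReal_comp
  have d1 := hT1.mul (hI.const_mul (n:ℂ)).cexp
  have d2 := (P.hasDerivAt (Complex.exp (t * Complex.I))).comp t hI.cexp
  have e : (fun s : ℝ => (T s : ℂ)) * (fun s : ℝ => Complex.exp (n * (s * Complex.I))) =
    (fun x => P.eval x) ∘ fun s : ℝ => Complex.exp (s * Complex.I) := funext hPe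
  rw [e] at d1
  have := d1.unique d2
  have e3 : ((deriv T t : ℝ) : ℂ) * Complex.exp (n * (t * Complex.I)) =
      P.derivative.eval (Complex.exp (t * Complex.I)) * (Complex.exp (t * Complex.I) * Complex.I)
      - (T t : ℂ) * (Complex.exp (n * (t * Complex.I)) * (n * Complex.I)) := by
    rw [← this]; ring
  have e4 := congrArg norm e3
  rw [norm_mul, hn, mul_one, Complex.norm_real, Real.norm_eq_abs] at e4
  rw [e4]
  refine (norm_sub_le _ _).trans ?_
  simp only [norm_mul, hn, Complex.norm_exp_ofReal_mul_I, Complex.norm_I, Complex.norm_natCast,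
    Complex.norm_real, Real.norm_eq_abs, mul_one, one_mul]
  have h0 := hM t (by simp [hδ.le])
  push_cast at h1
  have : |T t| * n ≤ M * n := by gcongr
  linarith

lemma trig_local_k (k : ℕ) : ∀ δ : ℝ, 0 < δ → δ ≤ 1 → ∃ C : ℝ, 0 < C ∧ ∀ (n : ℕ) (T : ℝ → ℝ),
    IsTrigPoly n T → ∀ t M : ℝ, (∀ s : ℝ, |s - t| ≤ δ → |T s| ≤ M) →
    |iteratedDeriv k T t| ≤ C * n ^ k * M := by
  induction k with
  | zero =>
    intro δ hδ hδ1
    refine ⟨1, one_pos, fun n T hT t M h => ?_⟩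
    simpa using h t (by simp [hδ.le])
  | succ k ih =>
    intro δ hδ hδ1
    obtain ⟨C1, hC1, h1⟩ := trig_local (δ / 2) (by linarith) (by linarith)
    obtain ⟨C2, hC2, h2⟩ := ih (δ / 2) (by linarith) (by linarith)
    refine ⟨C2 * C1, by positivity, fun n T hT t M h => ?_⟩
    rw [iteratedDeriv_succ']
    have := h2 n (deriv T) (trig_deriv n T hT) t (C1 * n * M) (by
      intro s hs
      refine h1 n T hT s M fun u hu => h u ?_
      calc |u - t| = |(u - s) + (s - t)| := by ring_nf
        _ ≤ _ := abs_add_le _ _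
        _ ≤ δ := by linarith)
    calc _ ≤ _ := this
      _ = _ := by rw [pow_succ]; ring

lemma le_supNormR (n : ℕ) (T : ℝ → ℝ) (hT : IsTrigPoly n T) (I : Set ℝ) (s : ℝ) (hs : s ∈ I) :
    |T s| ≤ supNormR T I := by
  obtain ⟨A, B, rfl⟩ := hT
  set T : ℝ → ℝ := fun t => ∑ j ∈ Finset.range (n + 1),
      (A j * Real.cos (j * t) + B j * Real.sin (j * t)) with hT
  have hb : ∀ x, |T x| ≤ ∑ j ∈ Finset.range (n + 1), (|A j| + |B j|) := by
    intro x
    refine (Finset.abs_sum_le_sum_abs _ _).trans (Finset.sum_le_sum fun j _ => ?_)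
    refine (abs_add_le _ _).trans ?_
    rw [abs_mul, abs_mul]
    exact add_le_add (mul_le_of_le_one_right (abs_nonneg _) (Real.abs_cos_le_one _))
      (mul_le_of_le_one_right (abs_nonneg _) (Real.abs_sin_le_one _))
  have hbdd : BddAbove (Set.range fun x => ⨆ (_ : x ∈ I), |T x|) := by
    refine ⟨∑ j ∈ Finset.range (n + 1), (|A j| + |B j|), ?_⟩
    rintro _ ⟨x, rfl⟩
    exact Real.iSup_le (fun _ => hb x) (Finset.sum_nonneg fun j _ => by positivity)
  have := le_ciSup hbdd s
  simp only [hs, ciSup_unique] at this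
  exact this

/-- rough Bernstein-type inequality on a finite union of intervals,
away from the endpoints. -/
theorem stmt_3 (m : ℕ) (c d : Fin m → ℝ)
    (hcd : ∀ j, c j < d j)
    (hsub : ∀ j, Set.Icc (c j) (d j) ⊆ Set.Ioo (-π) π)
    (hdisj : ∀ i j, i ≠ j → Disjoint (Set.Icc (c i) (d i)) (Set.Icc (c j) (d j)))
    (I : Set ℝ) (hI : I = ⋃ j, Set.Icc (c j) (d j))
    (k : ℕ) (hk : 0 < k)
    (I₀ : Set ℝ) (hI₀closed : IsClosed I₀) (hI₀ : I₀ ⊆ interior I) :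
    ∃ C > (0 : ℝ), ∀ n : ℕ, ∀ T : ℝ → ℝ, IsTrigPoly n T →
      ∀ t ∈ I₀, |iteratedDeriv k T t| ≤ C * (n : ℝ) ^ k * supNormR T I := by
  have hIc : IsCompact I := by rw [hI]; exact isCompact_iUnion fun j => isCompact_Icc
  have hc : IsCompact I₀ := hIc.of_isClosed_subset hI₀closed (hI₀.trans interior_subset)
  obtain ⟨δ, hδ, hsubδ⟩ := hc.exists_cthickening_subset_open isOpen_interior hI₀
  obtain ⟨C, hC, h⟩ := trig_local_k k (min δ 1) (lt_min hδ one_pos) (min_le_right _ _)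
  refine ⟨C, hC, fun n T hT t ht => h n T hT t _ fun s hs => le_supNormR n T hT I s ?_⟩
  refine interior_subset (hsubδ ?_)
  refine Metric.mem_cthickening_of_dist_le s t δ I₀ ht ?_
  rw [Real.dist_eq]; exact hs.trans (min_le_left _ _)
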